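/- Fix n ≥ 1 and a noninterlaced pair of k-element subsets A = {a_1,…,a_k} and B = {b_1,…,b_k} of {1,…,n}, listed so that a_1, a_2, …, a_k, b_k, b_{k−1}, …, b_1 occur in circular order. Then the noninterlaced minor det((M_{a_i,b_j})_{1≤i,j≤k}) can be expressed as a positive rational function of noninterlaced CONTIGUOUS minors: there exist multivariate real polynomials p and q, both with all coefficients nonnegative and q not identically zero, in variables indexed by the set T of triples (a,b,y) for which the contiguous minor CM_{a,b,y} has disjoint (hence noninterlaced) row set {a,…,a+y−1} and column set {b,…,b+y−1} modulo n, such that for every n×n real matrix M one has det((M_{a_i,b_j})_{i,j}) · q((CM_t(M))_{t∈T}) = p((CM_t(M))_{t∈T}). -/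

import Mathlib

/-- The contiguous minor `CM_{a,b,y}(M)` of an `n × n` matrix `M` (indexed by `ZMod n`,
i.e. indices are taken modulo `n`): the determinant of the `y × y` matrix whose rows are
`a, a+1, …, a+y-1` in order and whose columns are `b+y-1, …, b+1, b` in order. -/
noncomputable def contiguousMinor (n : ℕ) (M : Matrix (ZMod n) (ZMod n) ℝ)
    (a b : ℤ) (y : ℕ) : ℝ :=
  Matrix.det (Matrix.of fun i j : Fin y =>
    M (((a + (i : ℤ)) : ℤ) : ZMod n) (((b + (y : ℤ) - 1 - (j : ℤ)) : ℤ) : ZMod n))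

/-- The index set `T` of noninterlaced contiguous minors: triples `(a, b, y)` for which
the row set `{a, …, a+y-1}` and the column set `{b, …, b+y-1}`, taken modulo `n`,
are disjoint. -/
def ContigIdx (n : ℕ) : Set (ℤ × ℤ × ℕ) :=
  {s | ∀ i j : Fin s.2.2, ((s.1 + (i : ℤ) : ℤ) : ZMod n) ≠ ((s.2.1 + (j : ℤ) : ℤ) : ZMod n)}

/-- Three-term Plücker relation. -/
lemma det_eq_expand (m : ℕ) (A : Fin (m+1) → Fin (m+1) → ℝ) (p : Fin (m+1)) (v : Fin (m+1) → ℝ)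
    (κ : Fin m → Fin (m+1) → ℝ) (hv : A p = v) (hκ : ∀ i, A (p.succAbove i) = κ i) :
    Matrix.det (Matrix.of A) = (-1)^(p:ℕ) * ∑ j : Fin (m+1), (-1)^(j:ℕ) * v j *
      Matrix.det (Matrix.of fun i l => κ i (j.succAbove l)) := by
  rw [Matrix.det_succ_row _ p, Finset.mul_sum]
  refine Finset.sum_congr rfl fun j _ => ?_
  have : (Matrix.of A).submatrix p.succAbove j.succAbove
      = Matrix.of fun i l => κ i (j.succAbove l) := by
    ext i l; simp [hκ]
  rw [this]
  simp only [Matrix.of_apply, hv, pow_add]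
  ring

lemma plucker3 (m : ℕ) (W : Fin (m+3) → Fin (m+2) → ℝ) (σ : Fin (m+1)) :
    Matrix.det (Matrix.of fun i j : Fin (m+2) => W (σ.castSucc.succ.succAbove i) j) *
      Matrix.det (Matrix.of fun i j : Fin (m+1) => W i.castSucc.succ j.castSucc) =
    Matrix.det (Matrix.of fun i j : Fin (m+2) => W i.castSucc j) *
      Matrix.det (Matrix.of fun i j : Fin (m+1) =>
        W (σ.castSucc.succAbove i).succ j.castSucc) +
    Matrix.det (Matrix.of fun i j : Fin (m+2) => W i.succ j) *
      Matrix.det (Matrix.of fun i j : Fin (m+1) =>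
        W (σ.succ.succAbove i).castSucc j.castSucc) := by
  set κ : Fin m → Fin (m+1) → ℝ := fun i j => W (σ.succAbove i).castSucc.succ j.castSucc with hκ
  set d : Fin (m+1) → ℝ := fun j => (-1)^(j:ℕ) *
      Matrix.det (Matrix.of fun i l => κ i (j.succAbove l)) with hd
  set g : Fin (m+3) → ℝ := fun r => ∑ j : Fin (m+1), W r j.castSucc * d j with hg
  have key : ∀ (A : Fin (m+1) → Fin (m+1) → ℝ) (p : Fin (m+1)) (r : Fin (m+3)),
      (∀ j, A p j = W r j.castSucc) → (∀ i, A (p.succAbove i) = κ i) →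
      Matrix.det (Matrix.of A) = (-1)^(p:ℕ) * g r := by
    intro A p r h1 h2
    rw [det_eq_expand m A p (fun j => W r j.castSucc) κ (funext h1) h2]
    congr 1
    refine Finset.sum_congr rfl fun j _ => ?_
    simp only [hd]; ring
  have e1 := key (fun i j => W i.castSucc.succ j.castSucc) σ σ.castSucc.succ
    (fun j => rfl) (fun i => rfl)
  have e2 := key (fun i j => W (σ.castSucc.succAbove i).succ j.castSucc) (Fin.last m)
    (Fin.last (m+2)) (fun j => by
      have : σ.castSucc.succAbove (Fin.last m) = Fin.last (m+1) := by
        simp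
      simp [this]) (fun i => by
      funext j
      simp [hκ])
  have e3 := key (fun i j => W (σ.succ.succAbove i).castSucc j.castSucc) 0
    0 (fun j => by simp) (fun i => by
      funext j
      simp [hκ])
  have gz : ∀ i, g (σ.succAbove i).castSucc.succ = 0 := by
    intro i
    have := key (Function.update (fun i j => W i.castSucc.succ j.castSucc) σ (κ i)) σ
      (σ.succAbove i).castSucc.succ (fun j => by simp [hκ]) (fun l => by
        rw [Function.update_of_ne (Fin.succAbove_ne _ _)])
    rw [Matrix.det_zero_of_row_eq (i := σ) (j := σ.succAbove i) (Fin.succAbove_ne _ _).symm] at this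
    · rcases mul_eq_zero.1 this.symm with h | h
      · exact absurd h (pow_ne_zero _ (by norm_num))
      · exact h
    · funext j
      simp [hκ]
  -- the vanishing determinant
  have hdet : Matrix.det (Matrix.of fun (r c : Fin (m+3)) => (Fin.cons (g r) (W r) : Fin (m+3) → ℝ) c) = 0 := by
    by_contra hne
    set B := Matrix.of fun (r c : Fin (m+3)) => (Fin.cons (g r) (W r) : Fin (m+3) → ℝ) c with hB
    have hv : B.mulVec (Fin.cons (-1) (Fin.snoc d 0 : Fin (m+2) → ℝ)) = 0 := by
      funext r
      simp only [Matrix.mulVec, dotProduct, hB, Matrix.of_apply, Pi.zero_apply]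
      rw [Fin.sum_univ_succ]
      simp only [Fin.cons_zero, Fin.cons_succ]
      rw [Fin.sum_univ_castSucc]
      simp [hg]
    have := Matrix.eq_zero_of_mulVec_eq_zero hne hv
    have h0 := congrFun this 0
    simp at h0
  rw [Matrix.det_succ_column_zero] at hdet
  have hterm : ∀ r : Fin (m+3), (Matrix.of fun (r c : Fin (m+3)) => (Fin.cons (g r) (W r) : Fin (m+3) → ℝ) c).submatrix r.succAbove Fin.succ
      = Matrix.of fun i j : Fin (m+2) => W (r.succAbove i) j := by
    intro r; ext i j; simp
  simp only [hterm, Matrix.of_apply, Fin.cons_zero] at hdet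
  rw [Fin.sum_univ_succ, Fin.sum_univ_castSucc, Fin.sum_univ_succAbove _ σ] at hdet
  simp only [gz] at hdet
  simp only [mul_zero, zero_mul, Finset.sum_const_zero, add_zero, Fin.succ_last,
    Fin.succAbove_last, Fin.succAbove_zero] at hdet
  rw [e1, e2, e3]
  have s1 : ((-1:ℝ)^(σ:ℕ))^2 = 1 := by rw [← pow_mul, mul_comm, pow_mul]; simp
  simp only [Fin.val_zero, Fin.val_succ, Fin.val_castSucc, Fin.val_last, pow_succ, pow_zero] at hdet ⊢
  linear_combination -hdet

/-- Rational closure predicate. -/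
structure RatClosed {Ω : Type} (P : (Ω → ℝ) → Prop) : Prop where
  add : ∀ f g, P f → P g → P (fun ω => f ω + g ω)
  mul : ∀ f g, P f → P g → P (fun ω => f ω * g ω)
  div : ∀ f g h, P g → P h → (∀ ω, f ω * g ω = h ω) → P f

lemma gap_or_consec (m : ℕ) (I : Fin (m+2) → ℕ) (hI : StrictMono I) :
    (∃ σ : Fin (m+1), I σ.castSucc + 1 < I σ.succ) ∨ (∀ i, I i = I 0 + i) := by
  by_cases h : ∃ σ : Fin (m+1), I σ.castSucc + 1 < I σ.succ
  · exact Or.inl h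
  · right
    push Not at h
    intro i
    induction i using Fin.induction with
    | zero => simp
    | succ i ih =>
      have h1 := h i
      have h2 : I i.castSucc < I i.succ := hI Fin.castSucc_lt_succ
      simp only [Fin.val_succ, Fin.val_castSucc] at *
      omega

lemma insert_strictMono (m : ℕ) (I : Fin (m+2) → ℕ) (hI : StrictMono I) (σ : Fin (m+1))
    (hσ : I σ.castSucc + 1 < I σ.succ) :
    ∃ w : Fin (m+3) → ℕ, StrictMono w ∧ (∀ i, w (σ.castSucc.succ.succAbove i) = I i) := by
  refine ⟨Fin.insertNth σ.castSucc.succ (I σ.castSucc + 1) I, ?_, fun i => by simp⟩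
  intro x y hxy
  induction x using Fin.succAboveCases σ.castSucc.succ with
  | x =>
    induction y using Fin.succAboveCases σ.castSucc.succ with
    | x => exact absurd hxy (lt_irrefl _)
    | p j =>
      simp only [Fin.insertNth_apply_same, Fin.insertNth_apply_succAbove]
      rw [Fin.lt_succAbove_iff_le_castSucc] at hxy
      have : I σ.succ ≤ I j := hI.monotone (by
        simp only [Fin.le_def, Fin.val_succ, Fin.val_castSucc] at *; omega)
      omega
  | p i =>
    induction y using Fin.succAboveCases σ.castSucc.succ with
    | x =>
      simp only [Fin.insertNth_apply_same, Fin.insertNth_apply_succAbove]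
      rw [Fin.succAbove_lt_iff_castSucc_lt] at hxy
      have : I i ≤ I σ.castSucc := hI.monotone (by
        simp only [Fin.le_def, Fin.lt_def, Fin.val_succ, Fin.val_castSucc] at *; omega)
      omega
    | p j =>
      simp only [Fin.insertNth_apply_succAbove]
      exact hI ((Fin.strictMono_succAbove _).lt_iff_lt.1 hxy)

lemma fill_gaps {Ω : Type} {P : (Ω → ℝ) → Prop} (hP : RatClosed P) (X : Ω → ℕ → ℕ → ℝ)
    (R m : ℕ) (J : Fin (m+2) → ℕ)
    (hsmall : ∀ I : Fin (m+1) → ℕ, StrictMono I → (∀ i, I i < R) →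
      P (fun ω => Matrix.det (Matrix.of fun i j : Fin (m+1) => X ω (I i) (J j.castSucc))))
    (hcons : ∀ a : ℕ, a + (m+2) ≤ R →
      P (fun ω => Matrix.det (Matrix.of fun i j : Fin (m+2) => X ω (a + i) (J j)))) :
    ∀ (N : ℕ) (I : Fin (m+2) → ℕ), StrictMono I → (∀ i, I i < R) → I (Fin.last _) ≤ I 0 + N →
      P (fun ω => Matrix.det (Matrix.of fun i j : Fin (m+2) => X ω (I i) (J j))) := by
  intro N
  induction N with
  | zero =>
    intro I hI _ h
    have : I 0 < I (Fin.last _) := hI (Fin.last_pos)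
    omega
  | succ N ih =>
    intro I hI hR hN
    rcases gap_or_consec m I hI with ⟨σ, hσ⟩ | hc
    · obtain ⟨w, hw, hwI⟩ := insert_strictMono m I hI σ hσ
      have w0 : w 0 = I 0 := by
        rw [← hwI 0]; congr 1
      have wl : w (Fin.last _) = I (Fin.last _) := by
        rw [← hwI (Fin.last _)]; congr 1
        simp [Fin.ext_iff, Fin.succAbove, Fin.lt_def]; omega
      have wR : ∀ i, w i < R := fun i =>
        lt_of_le_of_lt (hw.monotone (Fin.le_last i)) (wl ▸ hR _)
      have l1 : w (Fin.last (m+1)).castSucc < w (Fin.last (m+2)) := hw (Fin.castSucc_lt_last _)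
      have l2 : w 0 < w (Fin.succ 0) := hw (Fin.succ_pos _)
      refine hP.div _ _ _ (hsmall (fun i => w i.castSucc.succ) ?_ (fun i => wR _))
        (hP.add _ _
          (hP.mul _ _ (ih (fun i => w i.castSucc) ?_ (fun i => wR _) ?_)
            (hsmall (fun i => w (σ.castSucc.succAbove i).succ) ?_ (fun i => wR _)))
          (hP.mul _ _ (ih (fun i => w i.succ) ?_ (fun i => wR _) ?_)
            (hsmall (fun i => w (σ.succ.succAbove i).castSucc) ?_ (fun i => wR _)))) ?_
      · intro i j h; exact hw (by simpa using h)
      · intro i j h; exact hw (by simpa using h)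
      · simp only [Fin.castSucc_zero]; omega
      · intro i j h; exact hw (by simpa using h)
      · intro i j h; exact hw (by simpa using h)
      · exact (by omega : w (Fin.last (m+2)) ≤ w (Fin.succ 0) + N)
      · intro i j h; exact hw (by simpa using h)
      · intro ω
        have := plucker3 m (fun r c => X ω (w r) (J c)) σ
        simp only [hwI] at this
        exact this
    · have h := hcons (I 0) (by
        have h1 := hR (Fin.last _)
        rw [hc] at h1
        simp at h1; omega)
      simp only [← hc] at h
      exact h

lemma all_minors {Ω : Type} {P : (Ω → ℝ) → Prop} (hP : RatClosed P) (X : Ω → ℕ → ℕ → ℝ)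
    (R C : ℕ)
    (solid : ∀ a b k : ℕ, a + k ≤ R → b + k ≤ C →
      P (fun ω => Matrix.det (Matrix.of fun i j : Fin k => X ω (a + i) (b + j)))) (k : ℕ) :
    ∀ I J : Fin k → ℕ, StrictMono I → StrictMono J → (∀ i, I i < R) → (∀ i, J i < C) →
      P (fun ω => Matrix.det (Matrix.of fun i j : Fin k => X ω (I i) (J j))) := by
  have stage1 : ∀ k b : ℕ, b + (k+1) ≤ C → ∀ I : Fin (k+1) → ℕ, StrictMono I → (∀ i, I i < R) →
      P (fun ω => Matrix.det (Matrix.of fun i j : Fin (k+1) => X ω (I i) (b + j))) := by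
    intro k
    induction k with
    | zero =>
      intro b hb I _ hR
      have := solid (I 0) b 1 (hR 0) hb
      simpa using this
    | succ m ih =>
      intro b hb I hI hR
      refine fill_gaps hP X R m (fun j => b + j) (fun I hI hR => ?_) (fun a ha => solid a b _ ha hb)
        (I (Fin.last _)) I hI hR (by omega)
      exact ih b (by omega) I hI hR
  have stage2 : ∀ k : ℕ, ∀ I J : Fin (k+1) → ℕ, StrictMono I → StrictMono J →
      (∀ i, I i < R) → (∀ i, J i < C) →
      P (fun ω => Matrix.det (Matrix.of fun i j : Fin (k+1) => X ω (I i) (J j))) := by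
    intro k
    induction k with
    | zero =>
      intro I J _ _ hR hC
      have := solid (I 0) (J 0) 1 (hR 0) (hC 0)
      simpa using this
    | succ m ih =>
      intro I J hI hJ hR hC
      have tr : ∀ (k : ℕ) (I J : Fin k → ℕ),
          (fun ω => Matrix.det (Matrix.of fun i j : Fin k => X ω (I j) (J i))) =
          (fun ω => Matrix.det (Matrix.of fun i j : Fin k => X ω (I i) (J j))) := by
        intro k I J
        funext ω
        rw [← Matrix.det_transpose]
        rfl
      have := fill_gaps hP (fun ω i j => X ω j i) C m I (fun J' hJ' hC' => ?_) (fun b hb => ?_)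
        (J (Fin.last _)) J hJ hC (by omega)
      · exact (tr _ I J) ▸ this
      · have h := ih (fun i => I i.castSucc) J' (fun i j h => hI (by simpa using h)) hJ'
          (fun i => hR _) hC'
        rw [← tr] at h
        exact h
      · have h := stage1 (m+1) b hb I hI hR
        have e := tr (m+2) I (fun j => b + j)
        refine e.symm ▸ ?_
        exact h
  intro I J hI hJ hR hC
  cases k with
  | zero =>
    have := solid 0 0 0 (by omega) (by omega)
    simpa using this
  | succ k => exact stage2 k I J hI hJ hR hC

/-- Polynomials with nonnegative coefficients, not identically zero. -/
def PosPoly {S : Type} (p : MvPolynomial S ℝ) : Prop :=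
  (∀ m, 0 ≤ MvPolynomial.coeff m p) ∧ p ≠ 0

lemma PosPoly.mul {S : Type} {p q : MvPolynomial S ℝ} (hp : PosPoly p) (hq : PosPoly q) :
    PosPoly (p * q) := by
  classical
  refine ⟨fun m => ?_, mul_ne_zero hp.2 hq.2⟩
  rw [MvPolynomial.coeff_mul]
  exact Finset.sum_nonneg fun x _ => mul_nonneg (hp.1 _) (hq.1 _)

lemma PosPoly.add {S : Type} {p q : MvPolynomial S ℝ} (hp : PosPoly p) (hq : PosPoly q) :
    PosPoly (p + q) := by
  refine ⟨fun m => ?_, fun h => hp.2 ?_⟩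
  · rw [MvPolynomial.coeff_add]
    exact add_nonneg (hp.1 _) (hq.1 _)
  · ext m
    have h1 : MvPolynomial.coeff m (p + q) = 0 := by rw [h]; simp
    rw [MvPolynomial.coeff_add] at h1
    have := hp.1 m
    have := hq.1 m
    simp only [MvPolynomial.coeff_zero]
    linarith

lemma PosPoly.one {S : Type} : PosPoly (1 : MvPolynomial S ℝ) := by
  classical
  refine ⟨fun m => ?_, one_ne_zero⟩
  rw [MvPolynomial.coeff_one]
  split_ifs <;> norm_num

lemma PosPoly.var {S : Type} (s : S) : PosPoly (MvPolynomial.X s : MvPolynomial S ℝ) := by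
  classical
  refine ⟨fun m => ?_, MvPolynomial.X_ne_zero s⟩
  rw [MvPolynomial.coeff_X]
  split_ifs <;> norm_num

/-- Positive rational functions of the family `v`. -/
def PosRat {S Ω : Type} (v : Ω → S → ℝ) (f : Ω → ℝ) : Prop :=
  ∃ p q : MvPolynomial S ℝ, PosPoly p ∧ PosPoly q ∧
    ∀ ω, f ω * MvPolynomial.eval (v ω) q = MvPolynomial.eval (v ω) p

lemma PosRat.closed {S Ω : Type} (v : Ω → S → ℝ) : RatClosed (PosRat v) where
  add := by
    rintro f g ⟨p, q, hp, hq, h⟩ ⟨p', q', hp', hq', h'⟩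
    refine ⟨p * q' + p' * q, q * q', (hp.mul hq').add (hp'.mul hq), hq.mul hq', fun ω => ?_⟩
    simp only [map_add, map_mul, ← h, ← h']
    ring
  mul := by
    rintro f g ⟨p, q, hp, hq, h⟩ ⟨p', q', hp', hq', h'⟩
    refine ⟨p * p', q * q', hp.mul hp', hq.mul hq', fun ω => ?_⟩
    simp only [map_mul, ← h, ← h']
    ring
  div := by
    rintro f g e ⟨p, q, hp, hq, h⟩ ⟨p', q', hp', hq', h'⟩ he
    refine ⟨p' * q, p * q', hp'.mul hq, hp.mul hq', fun ω => ?_⟩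
    simp only [map_mul, ← h, ← h', ← he]
    ring

/-- Any noninterlaced minor is a positive rational function of the noninterlaced
contiguous minors.  The noninterlaced pair `A = {a₁,…,a_k}`, `B = {b₁,…,b_k}` is encoded
by the hypothesis that after a cyclic rotation by `t`, the sequence `a₁, …, a_k, b_k, …, b₁`
is strictly increasing (i.e. it occurs in circular order).  Then there are polynomials
`p, q` in variables indexed by `T`, both with nonnegative coefficients and `q ≠ 0`, with
`det((M_{aᵢ,bⱼ})) · q((CM_t(M))_t) = p((CM_t(M))_t)` for every `n × n` real matrix `M`. -/
theorem noninterlaced_minor_positive_rational_in_contiguous (n k : ℕ) [NeZero n]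
    (a b : Fin k → Fin n) (t : ℕ)
    (hg : StrictMono (fun i : Fin k => ((a i : ℕ) + t) % n))
    (hh : StrictAnti (fun i : Fin k => ((b i : ℕ) + t) % n))
    (hgh : ∀ i j : Fin k, ((a i : ℕ) + t) % n < ((b j : ℕ) + t) % n) :
    ∃ p q : MvPolynomial (ContigIdx n) ℝ,
      (∀ m : (ContigIdx n) →₀ ℕ, 0 ≤ MvPolynomial.coeff m p) ∧
      (∀ m : (ContigIdx n) →₀ ℕ, 0 ≤ MvPolynomial.coeff m q) ∧
      q ≠ 0 ∧
      ∀ M : Matrix (ZMod n) (ZMod n) ℝ,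
        Matrix.det (Matrix.of fun i j : Fin k =>
            M (((a i : ℕ) : ZMod n)) (((b j : ℕ) : ZMod n))) *
          MvPolynomial.eval
            (fun s : ContigIdx n => contiguousMinor n M s.1.1 s.1.2.1 s.1.2.2) q =
          MvPolynomial.eval
            (fun s : ContigIdx n => contiguousMinor n M s.1.1 s.1.2.1 s.1.2.2) p := by
  have hn : 0 < n := Nat.pos_of_ne_zero (NeZero.ne n)
  set v : Matrix (ZMod n) (ZMod n) ℝ → ContigIdx n → ℝ :=
    fun M s => contiguousMinor n M s.1.1 s.1.2.1 s.1.2.2 with hv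
  set X : Matrix (ZMod n) (ZMod n) ℝ → ℕ → ℕ → ℝ := fun M i j =>
    M (((i : ℤ) - t : ℤ) : ZMod n) (((n : ℤ) - 1 - j - t : ℤ) : ZMod n) with hX
  have solid : ∀ R C : ℕ, R + C ≤ n → ∀ a b k : ℕ, a + k ≤ R → b + k ≤ C →
      PosRat v (fun M => Matrix.det (Matrix.of fun i j : Fin k => X M (a + i) (b + j))) := by
    intro R C hRC a b k ha hb
    have hmem : (((a : ℤ) - t, (n : ℤ) - b - t - k, k) : ℤ × ℤ × ℕ) ∈ ContigIdx n := by
      intro i j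
      have hi := i.2
      have hj := j.2
      simp only at hi hj
      intro h
      rw [ZMod.intCast_eq_intCast_iff_dvd_sub] at h
      have := Int.le_of_dvd (by simp only; omega) h
      simp only at this
      omega
    refine ⟨MvPolynomial.X ⟨_, hmem⟩, 1, PosPoly.var _, PosPoly.one, fun M => ?_⟩
    simp only [map_one, mul_one, MvPolynomial.eval_X, hv, contiguousMinor, hX]
    congr 1
    ext i j
    simp only [Matrix.of_apply]
    congr 2 <;> push_cast <;> ring
  have hlt : ∀ x : ℕ, x % n < n := fun x => Nat.mod_lt _ hn
  have main : PosRat v (fun M => Matrix.det (Matrix.of fun i j : Fin k =>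
      X M (((a i : ℕ) + t) % n) (n - 1 - ((b j : ℕ) + t) % n))) := by
    have hJ : StrictMono (fun j : Fin k => n - 1 - ((b j : ℕ) + t) % n) := by
      intro i j h
      have h1 := hh h
      have h2 := hlt ((b i : ℕ) + t)
      simp only at h1 ⊢
      omega
    rcases Nat.eq_zero_or_pos k with h0 | hk
    · exact all_minors (PosRat.closed v) X 0 0 (solid 0 0 (by omega)) k
        (fun i => ((a i : ℕ) + t) % n) _ hg hJ
        (fun i => absurd i.2 (by omega)) (fun i => absurd i.2 (by omega))
    · set l : Fin k := ⟨k - 1, by omega⟩ with hl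
      have hb := hlt ((a l : ℕ) + t)
      refine all_minors (PosRat.closed v) X (((a l : ℕ) + t) % n + 1)
        (n - (((a l : ℕ) + t) % n + 1)) (solid _ _ (by omega)) k
        (fun i => ((a i : ℕ) + t) % n) _ hg hJ (fun i => ?_) (fun j => ?_)
      · have : i ≤ l := by
          rw [Fin.le_def, hl]; simp only; omega
        have := hg.monotone this
        beta_reduce at this ⊢
        omega
      · have h1 := hgh l j
        have h2 := hlt ((b j : ℕ) + t)
        omega
  obtain ⟨p, q, hp, hq, h⟩ := main
  refine ⟨p, q, hp.1, hq.1, hq.2, fun M => ?_⟩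
  rw [← h M]
  congr 2
  ext i j
  simp only [Matrix.of_apply, hX]
  have h2 := hlt ((b j : ℕ) + t)
  have e : ((n - 1 - ((b j : ℕ) + t) % n : ℕ) : ℤ) = (n : ℤ) - 1 - ((((b j : ℕ) + t) % n : ℕ) : ℤ) := by
    omega
  rw [e]
  congr 1
  · push_cast
    simp
  · push_cast
    simp
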